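/- arXiv:1706.01281 — 2 statements merged into one kernel-verified Lean document; each statement's English description precedes it below -/
import Mathlib

section
/- Let d ≥ 2. For all n, m ∈ S^{d-1}, it holds μ( G_n^+ ∩ G_m^- ) = arccos⟪n, m⟫ / (2π), where G_n^+ = { R ∈ SO(d) : ⟪Rn, e_d⟫ > 0 } and G_m^- = { R ∈ SO(d) : ⟪Rm, e_d⟫ < 0 }. -/
noncomputable section
open MeasureTheory Real Filter
open scoped ENNReal RealInnerProductSpace

instance {m n : Type*} : MeasurableSpace (Matrix m n ℝ) := MeasurableSpace.pi

/-- The special orthogonal group `SO(d)` as matrices. -/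
abbrev SOd (d : ℕ) := Matrix.specialOrthogonalGroup (Fin d) ℝ

/-- The last coordinate `⟪x, e_d⟫` of a vector `x ∈ ℝ^d`. -/
def lastCoord {d : ℕ} (x : EuclideanSpace ℝ (Fin d)) : ℝ :=
  if h : 0 < d then x ⟨d - 1, Nat.sub_lt h Nat.one_pos⟩ else 0

/-- Action of a matrix on `ℝ^d` (Euclidean space) by matrix-vector multiplication. -/
def rotAct {d : ℕ} (R : Matrix (Fin d) (Fin d) ℝ) (x : EuclideanSpace ℝ (Fin d)) :
    EuclideanSpace ℝ (Fin d) :=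
  (EuclideanSpace.equiv (Fin d) ℝ).symm (R.mulVec (EuclideanSpace.equiv (Fin d) ℝ x))

/-- Action of `R ∈ SO(d)` on `ℝ^d`. -/
def rot {d : ℕ} (R : SOd d) (x : EuclideanSpace ℝ (Fin d)) : EuclideanSpace ℝ (Fin d) :=
  rotAct (R : Matrix (Fin d) (Fin d) ℝ) x

section Helpers
open Matrix

def planeRot {ι : Type*} [Fintype ι] [DecidableEq ι] (u v : ι → ℝ) (t : ℝ) : Matrix ι ι ℝ :=
  1 + (cos t - 1) • (vecMulVec u u + vecMulVec v v) + sin t • (vecMulVec v u - vecMulVec u v)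

lemma planeRot_mul {ι : Type*} [Fintype ι] [DecidableEq ι] (u v : ι → ℝ)
    (hu : u ⬝ᵥ u = 1) (hv : v ⬝ᵥ v = 1) (huv : u ⬝ᵥ v = 0) (s t : ℝ) :
    planeRot u v s * planeRot u v t = planeRot u v (s + t) := by
  have hvu : v ⬝ᵥ u = 0 := by rw [dotProduct_comm]; exact huv
  unfold planeRot
  set P := vecMulVec u u + vecMulVec v v with hP
  set J := vecMulVec v u - vecMulVec u v with hJ
  have h1 : P * P = P := by
    simp [hP, mul_add, add_mul, vecMulVec_mul_vecMulVec, hu, hv, huv, hvu]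
  have h2 : P * J = J := by
    simp [hP, hJ, mul_sub, add_mul, vecMulVec_mul_vecMulVec, hu, hv, huv, hvu]
  have h3 : J * P = J := by
    simp [hP, hJ, mul_add, sub_mul, vecMulVec_mul_vecMulVec, hu, hv, huv, hvu]
    try abel
  have h4 : J * J = -P := by
    simp [hP, hJ, mul_sub, sub_mul, vecMulVec_mul_vecMulVec, hu, hv, huv, hvu]
    try abel
  simp only [mul_add, add_mul, mul_one, one_mul, smul_mul_assoc, mul_smul_comm, h1, h2, h3, h4, cos_add, sin_add]
  module

lemma planeRot_transpose {ι : Type*} [Fintype ι] [DecidableEq ι] (u v : ι → ℝ) (t : ℝ) :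
    (planeRot u v t)ᵀ = planeRot u v (-t) := by
  simp [planeRot, transpose_vecMulVec]
  module

lemma planeRot_mem {ι : Type*} [Fintype ι] [DecidableEq ι] (u v : ι → ℝ)
    (hu : u ⬝ᵥ u = 1) (hv : v ⬝ᵥ v = 1) (huv : u ⬝ᵥ v = 0) (t : ℝ) :
    planeRot u v t ∈ Matrix.specialOrthogonalGroup ι ℝ := by
  have key : ∀ s, planeRot u v s * (planeRot u v s)ᵀ = 1 := by
    intro s
    rw [planeRot_transpose, planeRot_mul u v hu hv huv]
    simp [planeRot]
  rw [mem_specialOrthogonalGroup_iff, mem_orthogonalGroup_iff]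
  refine ⟨key t, ?_⟩
  have h2 := planeRot_mul u v hu hv huv (t/2) (t/2)
  rw [add_halves] at h2
  rw [← h2, det_mul]
  have := congrArg det (key (t/2))
  rwa [det_mul, det_transpose, det_one] at this

lemma planeRot_mulVec {ι : Type*} [Fintype ι] [DecidableEq ι] (u v : ι → ℝ)
    (hu : u ⬝ᵥ u = 1) (hv : v ⬝ᵥ v = 1) (huv : u ⬝ᵥ v = 0) (t θ : ℝ) :
    planeRot u v t *ᵥ (cos θ • u + sin θ • v) = cos (t + θ) • u + sin (t + θ) • v := by
  have hvu : v ⬝ᵥ u = 0 := by rw [dotProduct_comm]; exact huv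
  simp only [planeRot, add_mulVec, sub_mulVec, smul_mulVec, mulVec_add, mulVec_smul, one_mulVec, vecMulVec_mulVec, hu, hv, huv, hvu, cos_add, sin_add]
  simp
  module

/-- planar decomposition -/
lemma exists_frame {d : ℕ} (hd : 2 ≤ d) (n m : EuclideanSpace ℝ (Fin d)) (hn : ‖n‖ = 1) (hm : ‖m‖ = 1) :
    ∃ v : EuclideanSpace ℝ (Fin d), ‖v‖ = 1 ∧ inner ℝ n v = 0 ∧
      m = cos (arccos (inner ℝ n m)) • n + sin (arccos (inner ℝ n m)) • v := by
  have hb := abs_le.1 (abs_real_inner_le_norm n m)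
  rw [hn, hm, one_mul] at hb
  rw [cos_arccos hb.1 hb.2, sin_arccos]
  set c := (inner ℝ n m : ℝ) with hc
  have hnn : inner ℝ n n = (1:ℝ) := by rw [real_inner_self_eq_norm_sq, hn]; norm_num
  have hmm : inner ℝ m m = (1:ℝ) := by rw [real_inner_self_eq_norm_sq, hm]; norm_num
  have hw : ‖m - c • n‖ ^ 2 = 1 - c ^ 2 := by
    rw [← real_inner_self_eq_norm_sq]
    simp only [inner_sub_left, inner_sub_right, inner_smul_left, inner_smul_right, hnn, hmm, real_inner_comm n m, ← hc]
    simp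
    try ring
  have hw' : ‖m - c • n‖ = √(1 - c ^ 2) := by rw [← hw, sqrt_sq (norm_nonneg _)]
  by_cases h0 : m - c • n = 0
  · have : ∃ v : EuclideanSpace ℝ (Fin d), v ≠ 0 ∧ inner ℝ n v = (0:ℝ) := by
      have hr : 0 < Module.finrank ℝ (ℝ ∙ n)ᗮ := by
        have := Submodule.finrank_add_finrank_orthogonal (ℝ ∙ n)
        have h1 := finrank_span_le_card (R := ℝ) ({n} : Set (EuclideanSpace ℝ (Fin d)))
        simp at this h1
        omega
      have := Module.finrank_pos_iff.1 hr
      obtain ⟨v, hv⟩ := exists_ne (0 : (ℝ ∙ n)ᗮ)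
      refine ⟨v, by simpa using hv, ?_⟩
      exact Submodule.mem_orthogonal_singleton_iff_inner_right.1 v.2
    obtain ⟨v, hv, hv2⟩ := this
    refine ⟨‖v‖⁻¹ • v, by simp [norm_smul, hv], by simp [inner_smul_right, hv2], ?_⟩
    rw [← hw', h0, norm_zero, zero_smul, add_zero]
    exact sub_eq_zero.1 h0
  · refine ⟨‖m - c • n‖⁻¹ • (m - c • n), by simp [norm_smul, h0], ?_, ?_⟩
    · simp [inner_smul_right, inner_sub_right, hn, ← hc]
    · rw [← hw', smul_smul, mul_inv_cancel₀ (by simpa using h0)]; simp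

lemma arc_volume (a b θ : ℝ) (hab : a ≠ 0) (h0 : 0 ≤ θ) (h1 : θ ≤ π) :
    volume ({t : ℝ | 0 < cos t * a + sin t * b ∧ cos (t + θ) * a + sin (t + θ) * b < 0} ∩ Set.Ioc (-π) π)
      = ENNReal.ofReal θ := by
  obtain ⟨r, ψ, hr, ha, hb⟩ : ∃ r ψ : ℝ, 0 < r ∧ a = r * cos ψ ∧ b = r * sin ψ := by
    refine ⟨‖(⟨a, b⟩ : ℂ)‖, Complex.arg ⟨a, b⟩, ?_, ?_, ?_⟩
    · rw [norm_pos_iff]; intro h; exact hab (congrArg Complex.re h)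
    · rw [Complex.norm_mul_cos_arg]
    · rw [Complex.norm_mul_sin_arg]
  set S : Set ℝ := {x | 0 < cos x ∧ cos (x + θ) < 0} with hS
  have hSm : MeasurableSet S := by
    apply MeasurableSet.inter
    · exact measurableSet_lt measurable_const measurable_cos
    · exact measurableSet_lt (measurable_cos.comp (measurable_id.add_const θ)) measurable_const
  have hset : {t : ℝ | 0 < cos t * a + sin t * b ∧ cos (t + θ) * a + sin (t + θ) * b < 0}
      = {t | t - ψ ∈ S} := by
    ext t
    have e1 : ∀ t, cos t * a + sin t * b = r * cos (t - ψ) := by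
      intro t; rw [cos_sub, ha, hb]; ring
    simp only [Set.mem_ofPred_eq, hS, e1, mul_pos_iff_of_pos_left hr, mul_neg_iff, hr, hr.not_gt, true_and, false_and, or_false]
    rw [show t + θ - ψ = t - ψ + θ by ring]
  rw [hset]
  set f : ℝ → ℝ := S.indicator 1 with hf
  have hper : Function.Periodic f (2 * π) := by
    intro x
    have : x + 2 * π ∈ S ↔ x ∈ S := by
      simp only [hS, Set.mem_ofPred_eq, cos_add_two_pi, show x + 2 * π + θ = x + θ + 2 * π by ring]
    by_cases hx : x ∈ S
    · simp [hf, hx, this.2 hx]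
    · simp [hf, hx, mt this.1 hx]
  have hmeas : ∀ (A : Set ℝ) (p q : ℝ), MeasurableSet A → p ≤ q →
      ∫ x in p..q, A.indicator (1 : ℝ → ℝ) x = volume.real (A ∩ Set.Ioc p q) := by
    intro A p q hA hpq
    rw [intervalIntegral.integral_of_le hpq, integral_indicator_one hA, measureReal_restrict_apply hA]
  have hT : MeasurableSet {t | t - ψ ∈ S} := (measurable_id.sub_const ψ) hSm
  have hpi := pi_pos
  have e1 := hmeas {t | t - ψ ∈ S} (-π) π hT (by linarith)
  have e2 := hmeas S (-(π/2)) (-(π/2) + 2 * π) hSm (by linarith)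
  have e3 : ∫ x in (-π)..π, ({t | t - ψ ∈ S}).indicator (1 : ℝ → ℝ) x = ∫ x in (-(π/2))..(-(π/2) + 2 * π), f x := by
    have : (({t | t - ψ ∈ S}).indicator (1 : ℝ → ℝ)) = fun x => f (x - ψ) := by
      ext x; simp [hf, Set.indicator]
    rw [this, intervalIntegral.integral_comp_sub_right, show π - ψ = (-π - ψ) + 2 * π by ring]
    exact hper.intervalIntegral_add_eq _ _
  have e4 : S ∩ Set.Ioc (-(π/2)) (-(π/2) + 2 * π) = Set.Ioo (π/2 - θ) (π/2) := by
    ext x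
    simp only [hS, Set.mem_inter_iff, Set.mem_ofPred_eq, Set.mem_Ioc, Set.mem_Ioo]
    constructor
    · rintro ⟨⟨h2, h3⟩, h4, h5⟩
      have hx : x < π / 2 := by
        by_contra! h
        exact absurd h2 (not_lt.2 (cos_nonpos_of_pi_div_two_le_of_le h (by linarith)))
      refine ⟨?_, hx⟩
      by_contra! h
      exact absurd h3 (not_lt.2 (cos_nonneg_of_neg_pi_div_two_le_of_le (by linarith) (by linarith)))
    · rintro ⟨h2, h3⟩
      refine ⟨⟨cos_pos_of_mem_Ioo ⟨by linarith, h3⟩, cos_neg_of_pi_div_two_lt_of_lt (by linarith) (by linarith)⟩, by linarith, by linarith⟩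
  have e5 : volume.real ({t | t - ψ ∈ S} ∩ Set.Ioc (-π) π) = θ := by
    rw [← e1, e3, e2, e4, Real.volume_real_Ioo]; simp [h0]
  rw [← e5, ofReal_measureReal ((measure_mono Set.inter_subset_right).trans_lt (by simp)).ne]

lemma lastCoord_rot {d : ℕ} (h : 0 < d) (R : SOd d) (x : EuclideanSpace ℝ (Fin d)) :
    lastCoord (rot R x) = ((R : Matrix (Fin d) (Fin d) ℝ) *ᵥ x.ofLp) ⟨d - 1, Nat.sub_lt h Nat.one_pos⟩ := by
  unfold lastCoord
  rw [dif_pos h]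
  rfl

lemma lastCoord_rot_lin {d : ℕ} (h : 0 < d) (R : SOd d) (x y : EuclideanSpace ℝ (Fin d)) (a b : ℝ) :
    lastCoord (rot R (a • x + b • y)) = a * lastCoord (rot R x) + b * lastCoord (rot R y) := by
  simp only [lastCoord_rot h, WithLp.ofLp_add, WithLp.ofLp_smul, mulVec_add, mulVec_smul]
  simp

lemma lastCoord_rot_mul {d : ℕ} (h : 0 < d) (R T : SOd d) (x : EuclideanSpace ℝ (Fin d)) :
    lastCoord (rot (R * T) x) = lastCoord (rot R (WithLp.toLp 2 ((T : Matrix (Fin d) (Fin d) ℝ) *ᵥ x.ofLp))) := by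
  simp only [lastCoord_rot h, mulVec_mulVec]
  rfl

lemma measurable_entry {d : ℕ} (i j : Fin d) :
    Measurable (fun R : SOd d => (R : Matrix (Fin d) (Fin d) ℝ) i j) :=
  (measurable_pi_apply j).comp ((measurable_pi_apply i).comp measurable_subtype_coe)

lemma measurable_mul_right_SOd {d : ℕ} (T : SOd d) : Measurable (fun R : SOd d => R * T) := by
  apply Measurable.subtype_mk
  refine measurable_pi_lambda _ fun i => measurable_pi_lambda _ fun j => ?_
  show Measurable fun R : SOd d => ((R : Matrix (Fin d) (Fin d) ℝ) * (T : Matrix (Fin d) (Fin d) ℝ)) i j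
  simp only [mul_apply]
  exact Finset.measurable_sum _ fun k _ => (measurable_entry i k).mul_const _

lemma measurable_lastCoord_rot {d : ℕ} (h : 0 < d) :
    Measurable (fun p : EuclideanSpace ℝ (Fin d) × SOd d => lastCoord (rot p.2 p.1)) := by
  simp only [lastCoord_rot h, mulVec, dotProduct]
  refine Finset.measurable_sum _ fun k _ => ?_
  refine ((measurable_entry _ k).comp measurable_snd).mul ?_
  have : Measurable fun x : EuclideanSpace ℝ (Fin d) => x.ofLp k :=
    (EuclideanSpace.proj (𝕜 := ℝ) k).continuous.measurable
  exact this.comp measurable_fst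

lemma measurable_lastCoord_rot' {d : ℕ} (h : 0 < d) (x : EuclideanSpace ℝ (Fin d)) :
    Measurable (fun R : SOd d => lastCoord (rot R x)) :=
  (measurable_lastCoord_rot h).comp (measurable_const.prodMk measurable_id)

lemma hyperplane_null {d : ℕ} (h : 0 < d) (R : SOd d) :
    volume {x : EuclideanSpace ℝ (Fin d) | lastCoord (rot R x) = 0} = 0 := by
  let f : EuclideanSpace ℝ (Fin d) →ₗ[ℝ] ℝ :=
    { toFun := fun x => lastCoord (rot R x)
      map_add' := fun x y => by simpa using lastCoord_rot_lin h R x y 1 1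
      map_smul' := fun a x => by simpa using lastCoord_rot_lin h R x 0 a 0 }
  have hne : LinearMap.ker f ≠ ⊤ := by
    intro htop
    let e : Fin d → ℝ := Pi.single ⟨d - 1, Nat.sub_lt h Nat.one_pos⟩ 1
    have h1 : WithLp.toLp 2 ((R : Matrix (Fin d) (Fin d) ℝ)ᵀ *ᵥ e) ∈ LinearMap.ker f := by
      rw [htop]; trivial
    have h2 : lastCoord (rot R (WithLp.toLp 2 ((R : Matrix (Fin d) (Fin d) ℝ)ᵀ *ᵥ e))) = 0 := h1
    have h3 : (R : Matrix (Fin d) (Fin d) ℝ) * (R : Matrix (Fin d) (Fin d) ℝ)ᵀ = 1 :=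
      (mem_orthogonalGroup_iff _ _).1 (mem_specialOrthogonalGroup_iff.1 R.2).1
    rw [lastCoord_rot h, mulVec_mulVec, h3, one_mulVec] at h2
    simp [e] at h2
  exact Measure.addHaar_submodule volume _ hne

/-- Plane rotations, as elements of `SO(d)`. -/
lemma exists_rotation {d : ℕ} (h : 0 < d) (u v : EuclideanSpace ℝ (Fin d)) (hu : ‖u‖ = 1)
    (hv : ‖v‖ = 1) (huv : inner ℝ u v = (0 : ℝ)) (t : ℝ) :
    ∃ T : SOd d, ∀ (R : SOd d) (θ : ℝ), lastCoord (rot (R * T) (cos θ • u + sin θ • v)) =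
      cos (t + θ) * lastCoord (rot R u) + sin (t + θ) * lastCoord (rot R v) := by
  have e : ∀ x y : EuclideanSpace ℝ (Fin d), x.ofLp ⬝ᵥ y.ofLp = inner ℝ x y := by
    intro x y
    rw [EuclideanSpace.inner_eq_star_dotProduct, dotProduct_comm]; simp
  have hu' : u.ofLp ⬝ᵥ u.ofLp = 1 := by rw [e, real_inner_self_eq_norm_sq, hu]; norm_num
  have hv' : v.ofLp ⬝ᵥ v.ofLp = 1 := by rw [e, real_inner_self_eq_norm_sq, hv]; norm_num
  have huv' : u.ofLp ⬝ᵥ v.ofLp = 0 := by rw [e, huv]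
  refine ⟨⟨planeRot u.ofLp v.ofLp t, planeRot_mem _ _ hu' hv' huv' t⟩, fun R θ => ?_⟩
  rw [lastCoord_rot_mul h, ← lastCoord_rot_lin h]
  congr 2
  simp only [WithLp.ofLp_add, WithLp.ofLp_smul]
  rw [planeRot_mulVec _ _ hu' hv' huv']
  rfl

lemma meas_right {d : ℕ} (μ : Measure (SOd d))
    (hμright : ∀ R₀ : SOd d, μ.map (fun R => R * R₀) = μ) (T : SOd d) {A : Set (SOd d)}
    (hA : MeasurableSet A) : μ {R | R * T ∈ A} = μ A := by
  conv_rhs => rw [← hμright T, Measure.map_apply (measurable_mul_right_SOd T) hA]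
  rfl

lemma zero_set_null {d : ℕ} (hd : 2 ≤ d) (μ : Measure (SOd d)) [IsProbabilityMeasure μ]
    (hμright : ∀ R₀ : SOd d, μ.map (fun R => R * R₀) = μ)
    (n : EuclideanSpace ℝ (Fin d)) (hn : ‖n‖ = 1) :
    μ {R : SOd d | lastCoord (rot R n) = 0} = 0 := by
  have h : 0 < d := by omega
  have hE : MeasurableSet {p : EuclideanSpace ℝ (Fin d) × SOd d | lastCoord (rot p.2 p.1) = 0} :=
    measurable_lastCoord_rot h (measurableSet_singleton 0)
  have h0 : (volume.prod μ) {p : EuclideanSpace ℝ (Fin d) × SOd d | lastCoord (rot p.2 p.1) = 0} = 0 := by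
    rw [Measure.prod_apply_symm hE]
    simp only [Set.preimage_ofPred_eq, hyperplane_null h, lintegral_zero]
  have h1 := Measure.measure_ae_null_of_prod_null h0
  have : Nonempty (Fin d) := ⟨⟨0, h⟩⟩
  have h2 : ∀ᵐ x : EuclideanSpace ℝ (Fin d), x ≠ 0 := by
    simp [ae_iff]
  obtain ⟨x, hx, hx0⟩ := (h1.and h2).exists
  have hx' : μ {R : SOd d | lastCoord (rot R x) = 0} = 0 := hx
  have hxn : ‖x‖ ≠ 0 := by simpa using hx0
  have hw : ‖‖x‖⁻¹ • x‖ = 1 := by simp [norm_smul, hxn]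
  obtain ⟨v, hv, hwv, hnv⟩ := exists_frame hd (‖x‖⁻¹ • x) n hw hn
  obtain ⟨T, hT⟩ := exists_rotation h (‖x‖⁻¹ • x) v hw hv hwv (arccos (inner ℝ (‖x‖⁻¹ • x) n))
  have hT0 := fun R => hT R 0
  rw [← hx', ← meas_right μ hμright T (A := {R : SOd d | lastCoord (rot R x) = 0})
    (measurable_lastCoord_rot' h x (measurableSet_singleton 0))]
  congr 1
  ext R
  have h3 := hT R 0
  rw [add_zero, ← lastCoord_rot_lin h, ← hnv, cos_zero, sin_zero, one_smul, zero_smul, add_zero] at h3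
  have h4 := lastCoord_rot_lin h (R * T) x 0 ‖x‖⁻¹ 0
  rw [smul_zero, add_zero, zero_mul, add_zero] at h4
  simp only [Set.mem_ofPred_eq, ← h3, h4]
  simp [hxn]

end Helpers

/-!
STATEMENT 10 (claim (claim:measbis) in the proof of Lemma 3.2):
μ(G_n^+ ∩ G_m^-) = arccos⟪n,m⟫/(2π), where G_n^+ = {R : ⟪Rn,e_d⟫ > 0} and
G_m^- = {R : ⟪Rm,e_d⟫ < 0}.
-/

theorem haar_measure_plus_minus
    (d : ℕ) (hd : 2 ≤ d)
    (μ : Measure (SOd d)) [IsProbabilityMeasure μ]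
    (hμleft : ∀ R₀ : SOd d, μ.map (fun R => R₀ * R) = μ)
    (hμright : ∀ R₀ : SOd d, μ.map (fun R => R * R₀) = μ)
    (n m : EuclideanSpace ℝ (Fin d)) (hn : ‖n‖ = 1) (hm : ‖m‖ = 1) :
    μ {R : SOd d | 0 < lastCoord (rot R n) ∧ lastCoord (rot R m) < 0} =
      ENNReal.ofReal (Real.arccos ⟪n, m⟫ / (2 * π)) := by
  have h : 0 < d := by omega
  obtain ⟨v, hv, hnv, hmv⟩ := exists_frame hd n m hn hm
  set θ := arccos ⟪n, m⟫ with hθ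
  have hθ0 : 0 ≤ θ := arccos_nonneg _
  have hθ1 : θ ≤ π := arccos_le_pi _
  set A : Set (SOd d) := {R : SOd d | 0 < lastCoord (rot R n) ∧ lastCoord (rot R m) < 0} with hA
  have hAm : MeasurableSet A :=
    (measurableSet_lt measurable_const (measurable_lastCoord_rot' h n)).inter
      (measurableSet_lt (measurable_lastCoord_rot' h m) measurable_const)
  set B : Set (SOd d × ℝ) := {p | 0 < cos p.2 * lastCoord (rot p.1 n) + sin p.2 * lastCoord (rot p.1 v) ∧
    cos (p.2 + θ) * lastCoord (rot p.1 n) + sin (p.2 + θ) * lastCoord (rot p.1 v) < 0} with hB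
  have hBm : MeasurableSet B := by
    have m1 : Measurable fun p : SOd d × ℝ => lastCoord (rot p.1 n) :=
      (measurable_lastCoord_rot' h n).comp measurable_fst
    have m2 : Measurable fun p : SOd d × ℝ => lastCoord (rot p.1 v) :=
      (measurable_lastCoord_rot' h v).comp measurable_fst
    have m3 : Measurable fun p : SOd d × ℝ => p.2 := measurable_snd
    exact (measurableSet_lt measurable_const ((m3.cos.mul m1).add (m3.sin.mul m2))).inter
      (measurableSet_lt (((m3.add_const θ).cos.mul m1).add ((m3.add_const θ).sin.mul m2)) measurable_const)
  have h1 : ∀ t : ℝ, μ ((fun R => (R, t)) ⁻¹' B) = μ A := by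
    intro t
    obtain ⟨T, hT⟩ := exists_rotation h n v hn hv hnv t
    rw [← meas_right μ hμright T hAm]
    congr 1
    ext R
    have e1 := hT R 0
    have e2 := hT R θ
    rw [← hmv] at e2
    rw [cos_zero, sin_zero, one_smul, zero_smul, add_zero, add_zero] at e1
    simp only [hA, hB, Set.mem_preimage, Set.mem_ofPred_eq, e1, e2]
  have h2 : ∀ᵐ R ∂μ, (volume.restrict (Set.Ioc (-π) π)) (Prod.mk R ⁻¹' B) = ENNReal.ofReal θ := by
    have hz := zero_set_null hd μ hμright n hn
    have hz' : ∀ᵐ R ∂μ, lastCoord (rot R n) ≠ 0 := by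
      rw [ae_iff]; simpa using hz
    filter_upwards [hz'] with R hR
    rw [Measure.restrict_apply (measurable_prodMk_left hBm)]
    exact arc_volume _ (lastCoord (rot R v)) θ hR hθ0 hθ1
  have h3 := Measure.prod_apply (μ := μ) (ν := volume.restrict (Set.Ioc (-π) π)) hBm
  rw [Measure.prod_apply_symm hBm, lintegral_congr_ae h2] at h3
  simp only [h1, lintegral_const, measure_univ, mul_one, Measure.restrict_apply_univ, Real.volume_Ioc] at h3
  have hpi := pi_pos
  rw [show π - -π = 2 * π by ring] at h3
  rw [ENNReal.ofReal_div_of_pos (by positivity)]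
  rw [ENNReal.eq_div_iff (by simp [hpi]) ENNReal.ofReal_ne_top, mul_comm]
  exact h3
end
end

section
/- Let d ≥ 2 and for θ ∈ ℝ let R_θ ∈ SO(d) be the rotation acting on the plane spanned by e_{d-1}, e_d by R_θ e_d = cos θ · e_d + sin θ · e_{d-1} and R_θ e_{d-1} = −sin θ · e_d + cos θ · e_{d-1}, and acting as the identity on the span of e_1, …, e_{d-2}. Define ψ(θ) = μ( G_{e_d}^+ ∩ G_{R_θ e_d}^- ) for θ ∈ [0, π]. Then for every θ ∈ [0, π) and ξ ∈ [0, π − θ], it holds ψ(θ + ξ) = ψ(θ) + ψ(ξ). -/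
noncomputable section
open MeasureTheory Real Filter
open scoped ENNReal RealInnerProductSpace

/-- Rotation matrix in the plane of coordinates `i, j`. -/
def rotM {d : ℕ} (i j : Fin d) (t : ℝ) : Matrix (Fin d) (Fin d) ℝ :=
  1 + (Real.cos t - 1) • (Matrix.single i i 1 + Matrix.single j j 1)
    + Real.sin t • (Matrix.single j i 1 - Matrix.single i j 1)

lemma rotM_zero {d : ℕ} (i j : Fin d) : rotM i j 0 = 1 := by
  simp [rotM]

lemma rotM_transpose {d : ℕ} (i j : Fin d) (t : ℝ) :
    (rotM i j t).transpose = rotM i j (-t) := by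
  simp only [rotM, Matrix.transpose_add, Matrix.transpose_smul, Matrix.transpose_sub,
    Matrix.transpose_one, Matrix.transpose_single, Real.cos_neg, Real.sin_neg]
  module

lemma rotM_mul {d : ℕ} {i j : Fin d} (hij : i ≠ j) (s t : ℝ) :
    rotM i j s * rotM i j t = rotM i j (s + t) := by
  have hji := hij.symm
  have h1 : (Matrix.single i i (1:ℝ) + Matrix.single j j 1) *
      (Matrix.single i i 1 + Matrix.single j j 1)
      = Matrix.single i i 1 + Matrix.single j j 1 := by
    simp [mul_add, add_mul, Matrix.single_mul_single_of_ne, hij, hji]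
  have h2 : (Matrix.single i i (1:ℝ) + Matrix.single j j 1) *
      (Matrix.single j i 1 - Matrix.single i j 1)
      = Matrix.single j i 1 - Matrix.single i j 1 := by
    simp [mul_sub, add_mul, Matrix.single_mul_single_of_ne, hij, hji]
    try abel
  have h3 : (Matrix.single j i (1:ℝ) - Matrix.single i j 1) *
      (Matrix.single i i 1 + Matrix.single j j 1)
      = Matrix.single j i 1 - Matrix.single i j 1 := by
    simp [mul_add, sub_mul, Matrix.single_mul_single_of_ne, hij, hji]
    try abel
  have h4 : (Matrix.single j i (1:ℝ) - Matrix.single i j 1) *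
      (Matrix.single j i 1 - Matrix.single i j 1)
      = -(Matrix.single i i 1 + Matrix.single j j 1) := by
    simp [mul_sub, sub_mul, Matrix.single_mul_single_of_ne, hij, hji]
    try abel
  simp only [rotM, Real.cos_add, Real.sin_add]
  generalize (Matrix.single i i (1:ℝ) + Matrix.single j j 1) = P at *
  generalize (Matrix.single j i (1:ℝ) - Matrix.single i j 1) = Q at *
  simp only [mul_add, add_mul, smul_mul_assoc, mul_smul_comm, h1, h2, h3, h4, one_mul, mul_one]
  module

lemma rotM_mem {d : ℕ} {i j : Fin d} (hij : i ≠ j) (t : ℝ) :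
    rotM i j t ∈ Matrix.specialOrthogonalGroup (Fin d) ℝ := by
  have ho : ∀ t, rotM i j t * (rotM i j t).transpose = 1 := by
    intro t
    rw [rotM_transpose, rotM_mul hij, add_neg_cancel, rotM_zero]
  rw [Matrix.mem_specialOrthogonalGroup_iff]
  refine ⟨(Matrix.mem_orthogonalGroup_iff _ _).2 (ho t), ?_⟩
  have h := congrArg Matrix.det (ho (t / 2))
  rw [Matrix.det_mul, Matrix.det_transpose, Matrix.det_one] at h
  have h2 := rotM_mul hij (t / 2) (t / 2)
  rw [add_halves] at h2
  rw [← h2, Matrix.det_mul, h]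

/-- The value `⟪R (cos t e_i + sin t e_j), e_i⟫`. -/
def fval {d : ℕ} (i j : Fin d) (t : ℝ) (R : SOd d) : ℝ :=
  Real.cos t * R.1 i i + Real.sin t * R.1 i j

lemma fval_mul {d : ℕ} {i j : Fin d} (hij : i ≠ j) (s t : ℝ) (R : SOd d) :
    fval i j s (R * ⟨rotM i j t, rotM_mem hij t⟩) = fval i j (s + t) R := by
  have hji := hij.symm
  have h1 : (R.1 * rotM i j t) i i = Real.cos t * R.1 i i + Real.sin t * R.1 i j := by
    simp [rotM, mul_add, mul_sub, Matrix.mul_single_apply_of_ne, hij, hji]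
    ring
  have h2 : (R.1 * rotM i j t) i j = -Real.sin t * R.1 i i + Real.cos t * R.1 i j := by
    simp [rotM, mul_add, mul_sub, Matrix.mul_single_apply_of_ne, hij, hji]
    ring
  change Real.cos s * (R.1 * rotM i j t) i i + Real.sin s * (R.1 * rotM i j t) i j = _
  rw [h1, h2, fval, Real.cos_add, Real.sin_add]
  ring

lemma measurable_fval {d : ℕ} (i j : Fin d) (t : ℝ) : Measurable (fval i j t) := by
  have h : ∀ k l : Fin d, Measurable (fun R : SOd d => R.1 k l) := fun k l =>
    (measurable_pi_apply l).comp ((measurable_pi_apply k).comp measurable_subtype_coe)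
  exact ((h i i).const_mul _).add ((h i j).const_mul _)

lemma fval_rel {d : ℕ} (i j : Fin d) (s θ ξ : ℝ) (R : SOd d) :
    Real.sin ξ * fval i j s R + Real.sin θ * fval i j (s + θ + ξ) R
      = Real.sin (θ + ξ) * fval i j (s + θ) R := by
  have e : fval i j s R = fval i j (s + θ - θ) R := by simp
  rw [e]
  generalize s + θ = u
  simp only [fval, Real.cos_add, Real.sin_add, Real.cos_sub, Real.sin_sub]
  ring

lemma meas_shift {d : ℕ} {i j : Fin d} (hij : i ≠ j) (μ : Measure (SOd d))
    [IsProbabilityMeasure μ]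
    (hμright : ∀ R₀ : SOd d, μ.map (fun R => R * R₀) = μ) (t : ℝ)
    {S : Set (SOd d)} (hS : MeasurableSet S) :
    μ {R | R * ⟨rotM i j t, rotM_mem hij t⟩ ∈ S} = μ S := by
  set R₀ : SOd d := ⟨rotM i j t, rotM_mem hij t⟩
  have hm : AEMeasurable (fun R => R * R₀) μ := by
    by_contra hc
    have h := hμright R₀
    rw [Measure.map_of_not_aemeasurable hc] at h
    exact IsProbabilityMeasure.ne_zero μ h.symm
  conv_rhs => rw [← hμright R₀, Measure.map_apply_of_aemeasurable hm hS]
  rfl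

/-- Regular part of the zero set. -/
def zset {d : ℕ} (i j : Fin d) (t : ℝ) : Set (SOd d) :=
  {R | fval i j t R = 0 ∧ fval i j (t + π / 2) R ≠ 0}

lemma measurableSet_zset {d : ℕ} (i j : Fin d) (t : ℝ) : MeasurableSet (zset i j t) :=
  (measurable_fval i j t (measurableSet_singleton 0)).inter
    (measurable_fval i j (t + π / 2) (measurableSet_singleton 0).compl)

lemma zset_null {d : ℕ} {i j : Fin d} (hij : i ≠ j) (μ : Measure (SOd d))
    [IsProbabilityMeasure μ]
    (hμright : ∀ R₀ : SOd d, μ.map (fun R => R * R₀) = μ) (t : ℝ) :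
    μ (zset i j t) = 0 := by
  have heq : ∀ t, μ (zset i j t) = μ (zset i j 0) := by
    intro t
    rw [← meas_shift hij μ hμright t (measurableSet_zset i j 0)]
    congr 1
    ext R
    change (fval i j t R = 0 ∧ fval i j (t + π / 2) R ≠ 0) ↔
      (fval i j 0 (R * ⟨rotM i j t, rotM_mem hij t⟩) = 0 ∧
        fval i j (0 + π / 2) (R * ⟨rotM i j t, rotM_mem hij t⟩) ≠ 0)
    rw [fval_mul hij, fval_mul hij, zero_add, zero_add, add_comm t]
  rw [heq]
  by_contra hne
  have hdis : ∀ s t : ℝ, s < t → t < s + π → Disjoint (zset i j s) (zset i j t) := by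
    intro s t hst hts
    rw [Set.disjoint_left]
    rintro R ⟨h1, h2⟩ ⟨h3, h4⟩
    have h := fval_rel i j s (t - s) (π / 2 - (t - s)) R
    have e1 : s + (t - s) + (π / 2 - (t - s)) = s + π / 2 := by ring
    have e2 : s + (t - s) = t := by ring
    rw [e1, e2, h1, h3] at h
    have hs : 0 < Real.sin (t - s) := Real.sin_pos_of_pos_of_lt_pi (by linarith) (by linarith)
    simp only [mul_zero, zero_add, mul_eq_zero] at h
    rcases h with h | h
    · exact hs.ne' h
    · exact h2 h
  let u : ℕ → ℝ := fun n => 1 / ((n : ℝ) + 1)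
  have hu0 : ∀ n, 0 < u n := fun n => by positivity
  have hu1 : ∀ n, u n ≤ 1 := fun n => by
    simp only [u]
    rw [div_le_one (by positivity)]
    have : (0:ℝ) ≤ n := Nat.cast_nonneg n
    linarith
  have hlt : ∀ m n, m < n → u n < u m := fun m n h => one_div_lt_one_div_of_lt (by positivity)
    (by have : (m:ℝ) < n := by exact_mod_cast h
        linarith)
  have hpi := Real.pi_gt_three
  have hpw : Pairwise (Function.onFun Disjoint fun n => zset i j (u n)) := by
    intro m n hmn
    rcases lt_or_gt_of_ne hmn with h | h
    · exact (hdis _ _ (hlt m n h) (by linarith [hu0 n, hu1 m])).symm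
    · exact hdis _ _ (hlt n m h) (by linarith [hu0 m, hu1 n])
  have hU := measure_iUnion (μ := μ) hpw (fun n => measurableSet_zset i j (u n))
  simp only [heq] at hU
  rw [ENNReal.tsum_const_eq_top_of_ne_zero hne] at hU
  exact measure_ne_top μ _ hU

lemma lastCoord_rot_s11 {d : ℕ} (h0 : 0 < d) (hd1 : d - 1 < d) (hd2 : d - 2 < d) (R : SOd d) (t : ℝ) :
    lastCoord (rot R
        (Real.cos t • EuclideanSpace.single (⟨d - 1, hd1⟩ : Fin d) (1 : ℝ) +
         Real.sin t • EuclideanSpace.single (⟨d - 2, hd2⟩ : Fin d) (1 : ℝ)))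
    = fval (⟨d - 1, hd1⟩ : Fin d) ⟨d - 2, hd2⟩ t R := by
  simp only [lastCoord, h0, dite_true, rot, rotAct, fval]
  have hs : ∀ k : Fin d, (EuclideanSpace.equiv (Fin d) ℝ) (EuclideanSpace.single k 1)
      = Pi.single k (1 : ℝ) := by
    intro k
    ext l
    simp [EuclideanSpace.equiv, Pi.single_apply]
  simp [Matrix.mulVec_add, Matrix.mulVec_smul, hs]

/-!
STATEMENT 11: additivity of ψ(θ) = μ(G_{e_d}^+ ∩ G_{R_θ e_d}^-) from the proof of
Lemma 3.2, where R_θ e_d = cos θ · e_d + sin θ · e_{d-1} (the rotation R_θ acts in the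
plane spanned by e_{d-1}, e_d and as the identity elsewhere, and G_{R_θ e_d}^- depends
only on the vector R_θ e_d).
-/

theorem psi_additive
    (d : ℕ) (hd : 2 ≤ d)
    (μ : Measure (SOd d)) [IsProbabilityMeasure μ]
    (hμleft : ∀ R₀ : SOd d, μ.map (fun R => R₀ * R) = μ)
    (hμright : ∀ R₀ : SOd d, μ.map (fun R => R * R₀) = μ)
    (ψ : ℝ → ℝ≥0∞)
    (hψ : ∀ θ : ℝ, ψ θ = μ {R : SOd d |
      0 < lastCoord (rot R (EuclideanSpace.single (⟨d - 1, by omega⟩ : Fin d) (1 : ℝ))) ∧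
      lastCoord (rot R
        (Real.cos θ • EuclideanSpace.single (⟨d - 1, by omega⟩ : Fin d) (1 : ℝ) +
         Real.sin θ • EuclideanSpace.single (⟨d - 2, by omega⟩ : Fin d) (1 : ℝ))) < 0}) :
    ∀ θ ∈ Set.Ico (0 : ℝ) π, ∀ ξ ∈ Set.Icc (0 : ℝ) (π - θ),
      ψ (θ + ξ) = ψ θ + ψ ξ := by
  intro θ hθ ξ hξ
  obtain ⟨i, hi⟩ : ∃ i : Fin d, i = ⟨d - 1, by omega⟩ := ⟨_, rfl⟩
  obtain ⟨j, hj⟩ : ∃ j : Fin d, j = ⟨d - 2, by omega⟩ := ⟨_, rfl⟩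
  have hij : i ≠ j := by
    rw [hi, hj, Ne, Fin.mk.injEq]
    omega
  have hψ' : ∀ t, ψ t = μ {R | 0 < fval i j 0 R ∧ fval i j t R < 0} := by
    intro t
    rw [hψ t]
    congr 1
    ext R
    have h0 := lastCoord_rot_s11 (by omega) (by omega) (by omega) R 0
    rw [Real.cos_zero, Real.sin_zero, one_smul, zero_smul, add_zero] at h0
    rw [Set.mem_ofPred_eq, Set.mem_ofPred_eq, lastCoord_rot_s11 (by omega) (by omega) (by omega) R t, h0, hi, hj]
  have hψ0 : ψ 0 = 0 := by
    rw [hψ' 0]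
    convert measure_empty (μ := μ)
    ext R
    simp only [Set.mem_ofPred_eq, Set.mem_empty_iff_false, iff_false]
    rintro ⟨h1, h2⟩
    linarith
  obtain ⟨hθ0, hθπ⟩ := hθ
  obtain ⟨hξ0, hξπ⟩ := hξ
  rcases hθ0.eq_or_lt with rfl | hθ0
  · rw [hψ0, zero_add, zero_add]
  rcases hξ0.eq_or_lt with rfl | hξ0
  · rw [hψ0, add_zero, add_zero]
  have s1 : 0 < Real.sin θ := Real.sin_pos_of_pos_of_lt_pi hθ0 hθπ
  have s2 : 0 < Real.sin ξ := Real.sin_pos_of_pos_of_lt_pi hξ0 (by linarith)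
  have s3 : 0 ≤ Real.sin (θ + ξ) := Real.sin_nonneg_of_nonneg_of_le_pi (by linarith) (by linarith)
  have hrel : ∀ R, Real.sin ξ * fval i j 0 R + Real.sin θ * fval i j (θ + ξ) R
      = Real.sin (θ + ξ) * fval i j θ R := by
    intro R
    have := fval_rel i j 0 θ ξ R
    rwa [zero_add] at this
  have mpos : ∀ t, MeasurableSet {R | 0 < fval i j t R} := fun t =>
    measurable_fval i j t measurableSet_Ioi
  have mneg : ∀ t, MeasurableSet {R | fval i j t R < 0} := fun t =>
    measurable_fval i j t measurableSet_Iio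
  have mpn : ∀ s t, MeasurableSet {R | 0 < fval i j s R ∧ fval i j t R < 0} := fun s t =>
    (mpos s).inter (mneg t)
  have hB : ψ ξ = μ {R | 0 < fval i j θ R ∧ fval i j (θ + ξ) R < 0} := by
    rw [hψ' ξ, ← meas_shift hij μ hμright θ (mpn 0 ξ)]
    congr 1
    ext R
    change (0 < fval i j 0 (R * ⟨rotM i j θ, rotM_mem hij θ⟩) ∧
        fval i j ξ (R * ⟨rotM i j θ, rotM_mem hij θ⟩) < 0) ↔ _
    rw [fval_mul hij, fval_mul hij, zero_add, add_comm ξ]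
    rfl
  rw [hB, hψ' θ, hψ' (θ + ξ), ← measure_union _ (mpn θ (θ + ξ))]
  · apply le_antisymm
    · have hz := zset_null hij μ hμright θ
      rw [← add_zero (μ (_ ∪ _)), ← hz]
      refine le_trans (measure_mono ?_) (measure_union_le _ _)
      rintro R ⟨h1, h2⟩
      rcases lt_trichotomy (fval i j θ R) 0 with h | h | h
      · exact Or.inl (Or.inl ⟨h1, h⟩)
      · refine Or.inr ⟨h, fun h' => ?_⟩
        have hr := fval_rel i j 0 θ (π / 2) R
        rw [zero_add, h, h', Real.sin_pi_div_two] at hr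
        linarith
      · exact Or.inl (Or.inr ⟨h, h2⟩)
    · apply measure_mono
      rintro R (⟨h1, h2⟩ | ⟨h1, h2⟩)
      · refine ⟨h1, ?_⟩
        by_contra hc
        push Not at hc
        have a1 := mul_pos s2 h1
        have a2 := mul_nonneg s1.le hc
        have a3 := mul_nonneg s3 (neg_nonneg.2 h2.le)
        have := hrel R
        linarith
      · refine ⟨?_, h2⟩
        by_contra hc
        push Not at hc
        have a1 := mul_nonneg s2.le (neg_nonneg.2 hc)
        have a2 := mul_pos s1 (neg_pos.2 h2)
        have a3 := mul_nonneg s3 h1.le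
        have := hrel R
        linarith
  · rw [Set.disjoint_left]
    rintro R ⟨_, h1⟩ ⟨h2, _⟩
    exact lt_asymm h1 h2
end
end
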